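/- Let Ω ⊂ ℝⁿ (n ≥ 2) be a bounded open convex domain which is an (a,η) type domain with a > 2 and η > 0. Suppose F : Ω × (−∞,0) → ℝ is continuous and non-decreasing in its second argument, and there are constants A > 0, α ≥ 0, β ≥ n+1 with β < α + 2n − 1 − (2n−2)/a such that 0 < F(x,t) ≤ A·d_x^{β−n−1}·|t|^{−α} for all x ∈ Ω and t < 0. If u is a classical solution of det D²u = F(x,u) in Ω with u = 0 on ∂Ω, then there is a constant C depending only on a, n, α, β, η, A and diam Ω such that |u(y)| ≤ C·d_y^{γ₂} for every y ∈ Ω, where γ₂ = (β−n+1)/(n+α) + (2n−2)/(a(n+α)). -/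

import Mathlib

/-- The determinant of the Hessian matrix of `u` at `x`. -/
noncomputable def hessianDet {n : ℕ} (u : EuclideanSpace ℝ (Fin n) → ℝ)
    (x : EuclideanSpace ℝ (Fin n)) : ℝ :=
  (Matrix.of fun i j : Fin n =>
    iteratedFDeriv ℝ 2 u x ![EuclideanSpace.single i (1 : ℝ), EuclideanSpace.single j (1 : ℝ)]).det

/-- The last coordinate index of `Fin n`. -/
def lastIdx (n : ℕ) (hn : 0 < n) : Fin n := ⟨n - 1, Nat.sub_lt hn one_pos⟩

/-- `u` is a classical solution of `det D²u = F(x,u)` in `Ω`, `u = 0` on `∂Ω`. -/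
def IsClassicalSolution {n : ℕ} (Ω : Set (EuclideanSpace ℝ (Fin n)))
    (F : EuclideanSpace ℝ (Fin n) → ℝ → ℝ) (u : EuclideanSpace ℝ (Fin n) → ℝ) : Prop :=
  ContinuousOn u (closure Ω) ∧ ConvexOn ℝ Ω u ∧ ContDiffOn ℝ 2 u Ω ∧
    (∀ x ∈ Ω, u x < 0) ∧ (∀ x ∈ frontier Ω, u x = 0) ∧
    ∀ x ∈ Ω, hessianDet u x = F x (u x)

/-- `F` is continuous on `Ω × (-∞,0)`, non-decreasing in its second argument, and satisfies
`0 < F(x,t) ≤ A d_x^{β-n-1} |t|^{-α}`. -/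
def SatisfiesFCond {n : ℕ} (Ω : Set (EuclideanSpace ℝ (Fin n)))
    (F : EuclideanSpace ℝ (Fin n) → ℝ → ℝ) (A α β : ℝ) : Prop :=
  ContinuousOn (fun p : EuclideanSpace ℝ (Fin n) × ℝ => F p.1 p.2) (Ω ×ˢ Set.Iio (0 : ℝ)) ∧
    (∀ x ∈ Ω, ∀ s t : ℝ, s ≤ t → t < 0 → F x s ≤ F x t) ∧
    ∀ x ∈ Ω, ∀ t : ℝ, t < 0 →
      0 < F x t ∧ F x t ≤ A * Metric.infDist x (frontier Ω) ^ (β - n - 1) * |t| ^ (-α)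

/-- A boundary point `x₀` of `Ω` is of `(a,η)` type: after a translation and rotation,
`x₀ = 0` and `Ω ⊆ {x : xₙ ≥ η |x'|^a}`. -/
def IsATypePoint {n : ℕ} (hn : 0 < n) (Ω : Set (EuclideanSpace ℝ (Fin n)))
    (a η : ℝ) (x₀ : EuclideanSpace ℝ (Fin n)) : Prop :=
  ∃ f : EuclideanSpace ℝ (Fin n) ≃ₗᵢ[ℝ] EuclideanSpace ℝ (Fin n),
    ∀ y ∈ Ω,
      η * Real.sqrt (∑ j ∈ Finset.univ.erase (lastIdx n hn), f (y - x₀) j ^ 2) ^ a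
        ≤ f (y - x₀) (lastIdx n hn)

/-- `Ω` is an `(a,η)` type domain: every boundary point is of `(a,η)` type. -/
def IsATypeDomain {n : ℕ} (hn : 0 < n) (Ω : Set (EuclideanSpace ℝ (Fin n))) (a η : ℝ) : Prop :=
  ∀ x₀ ∈ frontier Ω, IsATypePoint hn Ω a η x₀

/-!
Take a boundary point `x₀` nearest to `y`, with inner normal `e`, and let `s` and `x'` be the normal
and tangential coordinates at `x₀`. The `(a,η)` condition says `|x'|² ≲ s^(2/a)` on `Ω`, so for
`δ = γ₂ - 2/a` and small `κ` the function `w = -2 s^γ₂ + κ |x'|² s^δ` lies between `-2 s^γ₂` and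
`-s^γ₂` and has `det D²w ≳ s^(γ₂ - 2 + (n - 1) δ)`. The exponent `γ₂` is the one for which this
power is that of `d_x^(β-n-1) |w|^(-α)` when `d_x ≈ s`. If `M w > u` somewhere, then at an interior
maximum of `M w - u` we have `D²u ≥ M D²w`, and monotonicity of the determinant contradicts the
equation once `M` is large; hence `u ≥ M w ≥ -2 M s^γ₂`.
-/

open scoped Matrix Topology RealInnerProductSpace
open Filter

section Determinants

variable {ι : Type*} [DecidableEq ι]

/-- The symmetric matrix with eigenvalue `c` along the unit vector `e` and eigenvalue `d` on the
orthogonal complement of `e`; it is the lower bound with which Hessians are compared. -/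
def axialMatrix {R : Type*} [CommRing R] (c d : R) (e : ι → R) : Matrix ι ι R :=
  d • (1 : Matrix ι ι R) + (c - d) • Matrix.vecMulVec e e

lemma isHermitian_axialMatrix (c d : ℝ) (e : ι → ℝ) : (axialMatrix c d e).IsHermitian := by
  ext i j
  simp [axialMatrix, Matrix.vecMulVec_apply, Matrix.one_apply, eq_comm, mul_comm]

variable [Fintype ι]

lemma one_le_det_one_add_of_posSemidef {P : Matrix ι ι ℝ} (hP : P.PosSemidef) :
    1 ≤ (1 + P).det := by
  have hermitian : (1 + P).IsHermitian := Matrix.isHermitian_one.add hP.isHermitian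
  have one_le_eigenvalues (i : ι) : 1 ≤ hermitian.eigenvalues i := by
    have unit : star (hermitian.eigenvectorBasis i).ofLp ⬝ᵥ (hermitian.eigenvectorBasis i).ofLp
        = 1 := by
      rw [dotProduct_comm, ← EuclideanSpace.inner_eq_star_dotProduct]
      simp
    rw [hermitian.eigenvalues_eq, Matrix.add_mulVec, Matrix.one_mulVec, dotProduct_add, unit]
    simpa using hP.dotProduct_mulVec_nonneg _
  rw [hermitian.det_eq_prod_eigenvalues]
  simpa using Finset.prod_le_prod (s := Finset.univ) (fun _ _ ↦ zero_le_one)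
    fun i _ ↦ one_le_eigenvalues i

-- Writing `B - A = Cᴴ * C`, the matrix determinant lemma gives
-- `det B = det A * det (1 + C * A⁻¹ * Cᴴ)`.
open scoped MatrixOrder in
lemma det_le_det_of_posSemidef_sub {A B : Matrix ι ι ℝ} (hA : A.PosSemidef)
    (hAB : (B - A).PosSemidef) : A.det ≤ B.det := by
  have hB : B.PosSemidef := by simpa using hA.add hAB
  rcases eq_or_ne A.det 0 with hdet | hdet
  · exact hdet ▸ hB.det_nonneg
  obtain ⟨C, hC⟩ := CStarAlgebra.nonneg_iff_eq_star_mul_self.mp hAB.nonneg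
  rw [Matrix.star_eq_conjTranspose] at hC
  calc A.det ≤ A.det * (1 + C * A⁻¹ * Cᴴ).det :=
        le_mul_of_one_le_right hA.det_nonneg <|
          one_le_det_one_add_of_posSemidef <| hA.inv.mul_mul_conjTranspose_same C
    _ = (A + Cᴴ * C).det := (Matrix.det_add_mul Cᴴ C hdet.isUnit).symm
    _ = B.det := by rw [← hC, add_sub_cancel]

lemma det_axialMatrix {𝕜 : Type*} [Field 𝕜] [Nonempty ι] {e : ι → 𝕜} (he : e ⬝ᵥ e = 1) (c : 𝕜)
    {d : 𝕜} (hd : d ≠ 0) : (axialMatrix c d e).det = c * d ^ (Fintype.card ι - 1) := by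
  have factor : axialMatrix c d e
      = d • (1 + Matrix.replicateCol Unit (((c - d) / d) • e) * Matrix.replicateRow Unit e) := by
    rw [axialMatrix, ← Matrix.vecMulVec_eq, Matrix.smul_vecMulVec, smul_add, smul_smul,
      mul_div_cancel₀ _ hd]
  rw [factor, Matrix.det_smul, Matrix.det_one_add_replicateCol_mul_replicateRow,
    dotProduct_smul, he, ← mul_pow_sub_one Fintype.card_ne_zero]
  simp only [smul_eq_mul]
  field_simp
  ring

lemma dotProduct_axialMatrix_mulVec {R : Type*} [CommRing R] (c d : R) (e v : ι → R) :
    v ⬝ᵥ axialMatrix c d e *ᵥ v = c * (e ⬝ᵥ v) ^ 2 + d * (v ⬝ᵥ v - (e ⬝ᵥ v) ^ 2) := by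
  rw [axialMatrix, Matrix.add_mulVec, dotProduct_add, Matrix.smul_mulVec, Matrix.smul_mulVec,
    Matrix.one_mulVec, Matrix.vecMulVec_mulVec, dotProduct_smul, dotProduct_smul,
    dotProduct_smul, dotProduct_comm v e]
  simp only [smul_eq_mul, MulOpposite.smul_eq_mul_unop, MulOpposite.unop_op]
  ring

end Determinants

lemma norm_sq_starProjection_orthogonal_singleton {E : Type*} [NormedAddCommGroup E]
    [InnerProductSpace ℝ E] {e : E} (he : ‖e‖ = 1) (v : E) :
    ‖(ℝ ∙ e)ᗮ.starProjection v‖ ^ 2 = ‖v‖ ^ 2 - ⟪e, v⟫ ^ 2 := by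
  rw [Submodule.norm_sq_eq_add_norm_sq_starProjection v (ℝ ∙ e),
    Submodule.starProjection_unit_singleton ℝ he, norm_smul, he, mul_one, Real.norm_eq_abs, sq_abs,
    add_sub_cancel_left]

section Hessian

variable {n : ℕ} {u : EuclideanSpace ℝ (Fin n) → ℝ} {x : EuclideanSpace ℝ (Fin n)}

/-- The matrix of second partial derivatives of `u` at `x`, whose determinant is `hessianDet`. -/
noncomputable def hessianMatrix (u : EuclideanSpace ℝ (Fin n) → ℝ)
    (x : EuclideanSpace ℝ (Fin n)) : Matrix (Fin n) (Fin n) ℝ :=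
  Matrix.of fun i j ↦
    iteratedFDeriv ℝ 2 u x ![EuclideanSpace.single i (1 : ℝ), EuclideanSpace.single j (1 : ℝ)]

lemma isHermitian_hessianMatrix (hu : ContDiffAt ℝ 2 u x) : (hessianMatrix u x).IsHermitian := by
  ext i j
  simpa [hessianMatrix, iteratedFDeriv_two_apply] using hu.isSymmSndFDerivAt (by simp) _ _

lemma dotProduct_hessianMatrix_mulVec (v : Fin n → ℝ) :
    v ⬝ᵥ hessianMatrix u x *ᵥ v = iteratedFDeriv ℝ 2 u x ![WithLp.toLp 2 v, WithLp.toLp 2 v] := by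
  have expand : WithLp.toLp 2 v = ∑ i, v i • EuclideanSpace.single i (1 : ℝ) := by
    ext k
    simp [Pi.single_apply]
  rw [iteratedFDeriv_two_apply, expand]
  simp only [dotProduct, Matrix.mulVec, hessianMatrix, iteratedFDeriv_two_apply,
    Matrix.cons_val_zero, Matrix.cons_val_one, Matrix.cons_val_fin_one, Matrix.of_apply,
    Finset.mul_sum, map_sum, map_smul, sum_apply, smul_apply, smul_eq_mul]
  rw [Finset.sum_comm]
  refine Finset.sum_congr rfl fun i _ ↦ Finset.sum_congr rfl fun j _ ↦ ?_
  ring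

lemma mul_pow_le_hessianDet [NeZero n] {e : EuclideanSpace ℝ (Fin n)} {c d : ℝ} (he : ‖e‖ = 1)
    (hc : 0 ≤ c) (hd : 0 < d) (hu : ContDiffAt ℝ 2 u x)
    (h : ∀ v, c * ⟪e, v⟫ ^ 2 + d * ‖(ℝ ∙ e)ᗮ.starProjection v‖ ^ 2
      ≤ iteratedFDeriv ℝ 2 u x ![v, v]) :
    c * d ^ (n - 1) ≤ hessianDet u x := by
  have axial_form (v : Fin n → ℝ) : v ⬝ᵥ axialMatrix c d e.ofLp *ᵥ v
      = c * ⟪e, WithLp.toLp 2 v⟫ ^ 2 + d * ‖(ℝ ∙ e)ᗮ.starProjection (WithLp.toLp 2 v)‖ ^ 2 := by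
    rw [dotProduct_axialMatrix_mulVec, norm_sq_starProjection_orthogonal_singleton he,
      ← real_inner_self_eq_norm_sq]
    simp only [EuclideanSpace.inner_eq_star_dotProduct, star_trivial, dotProduct_comm v]
  have axial_posSemidef : (axialMatrix c d e.ofLp).PosSemidef :=
    .of_dotProduct_mulVec_nonneg (isHermitian_axialMatrix c d _) fun v ↦ by
      rw [star_trivial, axial_form]
      positivity
  have diff_posSemidef : (hessianMatrix u x - axialMatrix c d e.ofLp).PosSemidef :=
    .of_dotProduct_mulVec_nonneg
      ((isHermitian_hessianMatrix hu).sub (isHermitian_axialMatrix c d _)) fun v ↦ by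
        rw [star_trivial, Matrix.sub_mulVec, dotProduct_sub, sub_nonneg, axial_form,
          dotProduct_hessianMatrix_mulVec]
        exact h _
  have unit : e.ofLp ⬝ᵥ e.ofLp = 1 := by
    have := real_inner_self_eq_norm_sq e
    rwa [EuclideanSpace.inner_eq_star_dotProduct, star_trivial, he, one_pow] at this
  calc c * d ^ (n - 1) = (axialMatrix c d e.ofLp).det := by
        rw [det_axialMatrix unit c hd.ne', Fintype.card_fin]
    _ ≤ hessianDet u x := det_le_det_of_posSemidef_sub axial_posSemidef diff_posSemidef

end Hessian

section SecondDerivativeTest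

lemma deriv_deriv_nonpos_of_isLocalMax {g : ℝ → ℝ} {x : ℝ} (hg : ContinuousAt g x)
    (hmax : IsLocalMax g x) : deriv (deriv g) x ≤ 0 := by
  by_contra! hpos
  have hmin : IsLocalMin g x := isLocalMin_of_deriv_deriv_pos hpos hmax.deriv_eq_zero hg
  have locally_const : g =ᶠ[𝓝 x] fun _ ↦ g x := by
    filter_upwards [hmax, hmin] with t using le_antisymm
  have : deriv (deriv g) x = 0 := by simpa using locally_const.deriv.deriv_eq
  exact hpos.ne' this

variable {E : Type*} [NormedAddCommGroup E] [NormedSpace ℝ E] {g w u : E → ℝ} {x : E}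

lemma deriv_deriv_comp_add_smul (hg : ContDiffAt ℝ 2 g x) (v : E) :
    deriv (deriv fun t : ℝ ↦ g (x + t • v)) 0 = iteratedFDeriv ℝ 2 g x ![v, v] := by
  have line (t : ℝ) : HasDerivAt (fun t : ℝ ↦ x + t • v) v t := by
    simpa using ((hasDerivAt_id t).smul_const v).const_add x
  have line_tendsto : Tendsto (fun t : ℝ ↦ x + t • v) (𝓝 0) (𝓝 x) := by
    simpa using (line 0).continuousAt.tendsto
  have first : deriv (fun t : ℝ ↦ g (x + t • v)) =ᶠ[𝓝 0] fun t ↦ fderiv ℝ g (x + t • v) v := by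
    filter_upwards [line_tendsto.eventually (hg.eventually (by norm_num))] with t ht
    exact ((ht.differentiableAt (by norm_num)).hasFDerivAt.comp_hasDerivAt t (line t)).deriv
  have second : DifferentiableAt ℝ (fderiv ℝ g) x :=
    (hg.fderiv_right (m := 1) (by norm_num)).differentiableAt one_ne_zero
  have along : HasDerivAt (fun t : ℝ ↦ fderiv ℝ g (x + t • v)) (fderiv ℝ (fderiv ℝ g) x v) 0 :=
    HasFDerivAt.comp_hasDerivAt 0 (by simpa using second.hasFDerivAt) (line 0)
  rw [first.deriv_eq, iteratedFDeriv_two_apply]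
  simpa using (along.clm_apply (hasDerivAt_const 0 v)).deriv

lemma iteratedFDeriv_two_nonpos_of_isLocalMax (hg : ContDiffAt ℝ 2 g x) (hmax : IsLocalMax g x)
    (v : E) : iteratedFDeriv ℝ 2 g x ![v, v] ≤ 0 := by
  have line_cont : ContinuousAt (fun t : ℝ ↦ x + t • v) 0 := by fun_prop
  rw [← deriv_deriv_comp_add_smul hg]
  apply deriv_deriv_nonpos_of_isLocalMax
  · exact ContinuousAt.comp (by simpa using hg.continuousAt) line_cont
  · exact IsMaxFilter.comp_tendsto (by simpa [IsLocalMax] using hmax) line_cont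

lemma iteratedFDeriv_two_le_of_isLocalMax_sub (hw : ContDiffAt ℝ 2 w x) (hu : ContDiffAt ℝ 2 u x)
    (hmax : IsLocalMax (w - u) x) (v : E) :
    iteratedFDeriv ℝ 2 w x ![v, v] ≤ iteratedFDeriv ℝ 2 u x ![v, v] := by
  have nonpos := iteratedFDeriv_two_nonpos_of_isLocalMax (g := w - u) (hw.sub hu) hmax v
  rwa [iteratedFDeriv_sub_apply (by exact_mod_cast hw) (by exact_mod_cast hu),
    sub_apply, sub_nonpos] at nonpos

end SecondDerivativeTest

section TouchingPoint

lemma exists_isLocalMax_sub_of_lt {X : Type*} [TopologicalSpace X] {Ω : Set X} {u w : X → ℝ}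
    (hΩ : IsOpen Ω) (hΩc : IsCompact (closure Ω)) (hu : ContinuousOn u (closure Ω))
    (hu_frontier : ∀ x ∈ frontier Ω, 0 ≤ u x) (hw : ContinuousOn w Ω) (hw_nonpos : ∀ x ∈ Ω, w x ≤ 0)
    {y : X} (hy : y ∈ Ω) (hlt : u y < w y) :
    ∃ x ∈ Ω, u x < w x ∧ IsLocalMax (w - u) x := by
  let m := w y - u y
  let K := closure Ω ∩ u ⁻¹' Set.Iic (-m)
  have K_compact : IsCompact K :=
    hΩc.of_isClosed_subset (hu.preimage_isClosed_of_isClosed isClosed_closure isClosed_Iic)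
      Set.inter_subset_left
  have m_pos : 0 < m := sub_pos.2 hlt
  have K_subset : K ⊆ Ω := by
    rintro x ⟨hx, hux : u x ≤ -m⟩
    by_contra hxΩ
    linarith [hu_frontier x (hΩ.frontier_eq ▸ ⟨hx, hxΩ⟩), m_pos]
  have hyK : y ∈ K := ⟨subset_closure hy, by change u y ≤ -m; linarith [hw_nonpos y hy]⟩
  obtain ⟨x, hxK, hmax⟩ := K_compact.exists_isMaxOn ⟨y, hyK⟩
    ((hw.mono K_subset).sub (hu.mono Set.inter_subset_left))
  have m_le : m ≤ w x - u x := hmax hyK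
  refine ⟨x, K_subset hxK, sub_pos.1 (m_pos.trans_le m_le), ?_⟩
  filter_upwards [hΩ.mem_nhds (K_subset hxK)] with z hz
  by_cases hzK : z ∈ K
  · exact hmax hzK
  · have : -m < u z := by
      by_contra! h
      exact hzK ⟨subset_closure hz, h⟩
    simp only [Pi.sub_apply]
    linarith [hw_nonpos z hz]

end TouchingPoint

section Barrier

variable {E G : Type*} [NormedAddCommGroup E] [NormedSpace ℝ E] [NormedAddCommGroup G]
  [InnerProductSpace ℝ G] {ℓ : StrongDual ℝ E} {q : E →L[ℝ] G} {γ δ κ L : ℝ} {z : E}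

/-- The barrier `-2 s^γ + κ |q z|² s^δ` built from a normal coordinate `s = ℓ z` and a tangential
coordinate `q z`; a large multiple of it is compared with the solution from below. -/
noncomputable def barrier (ℓ : StrongDual ℝ E) (q : E →L[ℝ] G) (γ δ κ : ℝ) (z : E) : ℝ :=
  -2 * ℓ z ^ γ + κ * ‖q z‖ ^ 2 * ℓ z ^ δ

/-- `κ` is small enough that, on the region `|q z|² ≤ L s^(γ - δ)`, the second term of `barrier` is
at most `s^γ` and the bad terms of its Hessian are absorbed by half of the Hessian of `-2 s^γ`. -/
structure IsBarrierCoeff (γ δ L κ : ℝ) : Prop where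
  pos : 0 < κ
  mul_le_one : κ * L ≤ 1
  mul_le : κ * L * (|δ * (δ - 1)| + 4 * δ ^ 2) ≤ γ * (1 - γ)

lemma exists_isBarrierCoeff (hγ₀ : 0 < γ) (hγ₁ : γ < 1) (hL : 0 < L) (δ : ℝ) :
    ∃ κ, IsBarrierCoeff γ δ L κ := by
  have hγ : 0 < γ * (1 - γ) := mul_pos hγ₀ (sub_pos.2 hγ₁)
  set T := |δ * (δ - 1)| + 4 * δ ^ 2
  have hT : 0 ≤ T := by positivity
  have κ_mul_L : γ * (1 - γ) / (L * (1 + T)) * L = γ * (1 - γ) / (1 + T) := by field_simp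
  refine ⟨γ * (1 - γ) / (L * (1 + T)), by positivity, ?_, ?_⟩
  · rw [κ_mul_L, div_le_one (by positivity)]
    nlinarith
  · rw [κ_mul_L, div_mul_eq_mul_div, div_le_iff₀ (by positivity)]
    exact mul_le_mul_of_nonneg_left (by linarith) hγ.le

lemma contDiffAt_barrier (hz : 0 < ℓ z) : ContDiffAt ℝ 2 (barrier ℓ q γ δ κ) z := by
  have hpow (p : ℝ) : ContDiffAt ℝ 2 (fun z ↦ ℓ z ^ p) z :=
    ℓ.contDiff.contDiffAt.rpow_const_of_ne hz.ne'
  have hnorm : ContDiffAt ℝ 2 (fun z ↦ ‖q z‖ ^ 2) z := (q.contDiff.norm_sq ℝ).contDiffAt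
  exact (contDiffAt_const.mul (hpow γ)).add ((contDiffAt_const.mul hnorm).mul (hpow δ))

lemma deriv_deriv_rpow_add_mul {s : ℝ} (hs : 0 < s) (c γ δ κ R P S : ℝ) :
    deriv (deriv fun t : ℝ ↦
        -2 * (s + t * c) ^ γ + κ * (R + 2 * t * P + t ^ 2 * S) * (s + t * c) ^ δ) 0
      = 2 * γ * (1 - γ) * s ^ (γ - 2) * c ^ 2 + 2 * κ * S * s ^ δ
        + 4 * κ * δ * P * c * s ^ (δ - 1) + κ * δ * (δ - 1) * R * c ^ 2 * s ^ (δ - 2) := by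
  have affine (t : ℝ) : HasDerivAt (fun t : ℝ ↦ s + t * c) c t := by
    simpa using ((hasDerivAt_id t).mul_const c).const_add s
  have power (p t : ℝ) (ht : 0 < s + t * c) :
      HasDerivAt (fun t : ℝ ↦ (s + t * c) ^ p) (c * p * (s + t * c) ^ (p - 1)) t :=
    (affine t).rpow_const (Or.inl ht.ne')
  have quadratic (t : ℝ) :
      HasDerivAt (fun t : ℝ ↦ R + 2 * t * P + t ^ 2 * S) (2 * P + 2 * t * S) t := by
    refine (((((hasDerivAt_id t).const_mul 2).mul_const P).const_add R).add
      (((hasDerivAt_id t).pow 2).mul_const S)).congr_deriv ?_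
    simp
  have linear : HasDerivAt (fun t : ℝ ↦ 2 * P + 2 * t * S) (2 * S) 0 := by
    simpa using (((hasDerivAt_id (0 : ℝ)).const_mul 2).mul_const S).const_add (2 * P)
  have pos_near : ∀ᶠ t in 𝓝 (0 : ℝ), 0 < s + t * c :=
    (affine 0).continuousAt.eventually_const_lt (by simpa using hs)
  have first : deriv (fun t : ℝ ↦
        -2 * (s + t * c) ^ γ + κ * (R + 2 * t * P + t ^ 2 * S) * (s + t * c) ^ δ) =ᶠ[𝓝 0]
      fun t ↦ -2 * (c * γ * (s + t * c) ^ (γ - 1)) + (κ * (2 * P + 2 * t * S) * (s + t * c) ^ δ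
        + κ * (R + 2 * t * P + t ^ 2 * S) * (c * δ * (s + t * c) ^ (δ - 1))) := by
    filter_upwards [pos_near] with t ht
    exact (((power γ t ht).const_mul (-2)).add
      (((quadratic t).const_mul κ).mul (power δ t ht))).deriv
  have h₀ : 0 < s + 0 * c := by simpa using hs
  have second := (((power (γ - 1) 0 h₀).const_mul (c * γ)).const_mul (-2)).add
    (((linear.const_mul κ).mul (power δ 0 h₀)).add
      (((quadratic 0).const_mul κ).mul ((power (δ - 1) 0 h₀).const_mul (c * δ))))
  rw [first.deriv_eq]
  refine second.deriv.trans ?_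
  rw [show γ - 1 - 1 = γ - 2 by ring, show δ - 1 - 1 = δ - 2 by ring]
  simp only [zero_mul, add_zero, mul_zero]
  ring

lemma barrier_add_smul (z v : E) (t : ℝ) :
    barrier ℓ q γ δ κ (z + t • v) = -2 * (ℓ z + t * ℓ v) ^ γ
      + κ * (‖q z‖ ^ 2 + 2 * t * ⟪q z, q v⟫ + t ^ 2 * ‖q v‖ ^ 2) * (ℓ z + t * ℓ v) ^ δ := by
  have expand : ‖q (z + t • v)‖ ^ 2 = ‖q z‖ ^ 2 + 2 * t * ⟪q z, q v⟫ + t ^ 2 * ‖q v‖ ^ 2 := by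
    rw [map_add, map_smul, norm_add_sq_real, norm_smul, mul_pow, Real.norm_eq_abs, sq_abs,
      real_inner_smul_right]
    ring
  rw [barrier, expand, map_add, map_smul, smul_eq_mul]

lemma iteratedFDeriv_two_barrier_apply_self (hz : 0 < ℓ z) (v : E) :
    iteratedFDeriv ℝ 2 (barrier ℓ q γ δ κ) z ![v, v]
      = 2 * γ * (1 - γ) * ℓ z ^ (γ - 2) * ℓ v ^ 2 + 2 * κ * ‖q v‖ ^ 2 * ℓ z ^ δ
        + 4 * κ * δ * ⟪q z, q v⟫ * ℓ v * ℓ z ^ (δ - 1)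
        + κ * δ * (δ - 1) * ‖q z‖ ^ 2 * ℓ v ^ 2 * ℓ z ^ (δ - 2) := by
  rw [← deriv_deriv_comp_add_smul (contDiffAt_barrier hz)]
  simp only [barrier_add_smul, deriv_deriv_rpow_add_mul hz]

-- Completing the square absorbs the cross term, leaving a remainder quadratic in `ℓ v` only.
lemma iteratedFDeriv_two_barrier_eq_add_sq (hz : 0 < ℓ z) (v : E) :
    iteratedFDeriv ℝ 2 (barrier ℓ q γ δ κ) z ![v, v]
      = γ * (1 - γ) * ℓ z ^ (γ - 2) * ℓ v ^ 2 + κ * ℓ z ^ δ * ‖q v‖ ^ 2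
        + κ * ℓ z ^ δ * ‖q v + (2 * δ * ℓ v / ℓ z) • q z‖ ^ 2
        + (γ * (1 - γ) * ℓ z ^ (γ - 2)
          + κ * (δ * (δ - 1) - 4 * δ ^ 2) * (‖q z‖ ^ 2 * ℓ z ^ (δ - 2))) * ℓ v ^ 2 := by
  have pow_sub_one : ℓ z ^ (δ - 1) = ℓ z ^ δ / ℓ z := Real.rpow_sub_one hz.ne' δ
  have pow_sub_two : ℓ z ^ (δ - 2) = ℓ z ^ δ / ℓ z ^ 2 := by rw [Real.rpow_sub hz, Real.rpow_two]
  rw [iteratedFDeriv_two_barrier_apply_self hz, pow_sub_one, pow_sub_two, norm_add_sq_real,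
    real_inner_smul_right, norm_smul, mul_pow, Real.norm_eq_abs, sq_abs, real_inner_comm]
  field_simp
  ring

lemma barrier_remainder_nonneg {r s : ℝ} (hκ : IsBarrierCoeff γ δ L κ) (hs : 0 < s)
    (hr : r ^ 2 ≤ L * s ^ (γ - δ)) :
    0 ≤ γ * (1 - γ) * s ^ (γ - 2) + κ * (δ * (δ - 1) - 4 * δ ^ 2) * (r ^ 2 * s ^ (δ - 2)) := by
  have κ_pos := hκ.pos
  have tangential : r ^ 2 * s ^ (δ - 2) ≤ L * s ^ (γ - 2) :=
    calc r ^ 2 * s ^ (δ - 2) ≤ L * s ^ (γ - δ) * s ^ (δ - 2) := by gcongr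
      _ = L * s ^ (γ - 2) := by rw [mul_assoc, ← Real.rpow_add hs, sub_add_sub_cancel]
  have coeff : 4 * δ ^ 2 - δ * (δ - 1) ≤ |δ * (δ - 1)| + 4 * δ ^ 2 := by
    linarith [neg_abs_le (δ * (δ - 1))]
  have absorbed : κ * (4 * δ ^ 2 - δ * (δ - 1)) * (r ^ 2 * s ^ (δ - 2))
      ≤ γ * (1 - γ) * s ^ (γ - 2) :=
    calc κ * (4 * δ ^ 2 - δ * (δ - 1)) * (r ^ 2 * s ^ (δ - 2))
        ≤ κ * (|δ * (δ - 1)| + 4 * δ ^ 2) * (L * s ^ (γ - 2)) := by gcongr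
      _ = κ * L * (|δ * (δ - 1)| + 4 * δ ^ 2) * s ^ (γ - 2) := by ring
      _ ≤ γ * (1 - γ) * s ^ (γ - 2) := mul_le_mul_of_nonneg_right hκ.mul_le (by positivity)
  linarith

lemma le_iteratedFDeriv_two_barrier (hκ : IsBarrierCoeff γ δ L κ) (hz : 0 < ℓ z)
    (hq : ‖q z‖ ^ 2 ≤ L * ℓ z ^ (γ - δ)) (v : E) :
    γ * (1 - γ) * ℓ z ^ (γ - 2) * ℓ v ^ 2 + κ * ℓ z ^ δ * ‖q v‖ ^ 2
      ≤ iteratedFDeriv ℝ 2 (barrier ℓ q γ δ κ) z ![v, v] := by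
  have κ_pos := hκ.pos
  have square : 0 ≤ κ * ℓ z ^ δ * ‖q v + (2 * δ * ℓ v / ℓ z) • q z‖ ^ 2 := by positivity
  rw [iteratedFDeriv_two_barrier_eq_add_sq hz]
  linarith [mul_nonneg (barrier_remainder_nonneg hκ hz hq) (sq_nonneg (ℓ v))]

lemma barrier_le_neg_rpow (hκ : IsBarrierCoeff γ δ L κ) (hz : 0 < ℓ z)
    (hq : ‖q z‖ ^ 2 ≤ L * ℓ z ^ (γ - δ)) : barrier ℓ q γ δ κ z ≤ -ℓ z ^ γ := by
  have κ_pos := hκ.pos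
  have : κ * ‖q z‖ ^ 2 * ℓ z ^ δ ≤ ℓ z ^ γ :=
    calc κ * ‖q z‖ ^ 2 * ℓ z ^ δ ≤ κ * (L * ℓ z ^ (γ - δ)) * ℓ z ^ δ := by gcongr
      _ = κ * L * ℓ z ^ γ := by
        rw [← mul_assoc, mul_assoc, ← Real.rpow_add hz, sub_add_cancel]
      _ ≤ ℓ z ^ γ := mul_le_of_le_one_left (by positivity) hκ.mul_le_one
  rw [barrier]
  linarith

lemma neg_two_mul_rpow_le_barrier (hκ : 0 ≤ κ) (hz : 0 ≤ ℓ z) :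
    -2 * ℓ z ^ γ ≤ barrier ℓ q γ δ κ z :=
  le_add_of_nonneg_right (by positivity)

end Barrier

section Geometry

lemma pos_of_nonneg_on_isOpen {E : Type*} [AddCommGroup E] [Module ℝ E] [TopologicalSpace E]
    [IsTopologicalAddGroup E] [ContinuousSMul ℝ E] {Ω : Set E} {x₀ y : E} {ℓ : StrongDual ℝ E}
    (hΩ : IsOpen Ω) (hℓ : ℓ ≠ 0) (h : ∀ z ∈ Ω, 0 ≤ ℓ (z - x₀)) (hy : y ∈ Ω) :
    0 < ℓ (y - x₀) := by
  have isOpen_image : IsOpen (ℓ '' ((· - x₀) '' Ω)) :=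
    ℓ.isOpenMap_of_ne_zero hℓ _ ((Homeomorph.subRight x₀).isOpenMap _ hΩ)
  have image_subset : ℓ '' ((· - x₀) '' Ω) ⊆ Set.Ici 0 := by
    rintro _ ⟨_, ⟨z, hz, rfl⟩, rfl⟩
    exact h z hz
  have subset_Ioi := isOpen_image.subset_interior_iff.2 image_subset
  rw [interior_Ici] at subset_Ioi
  exact subset_Ioi ⟨_, ⟨y, hy, rfl⟩, rfl⟩

variable {E : Type*} [NormedAddCommGroup E]

lemma infDist_frontier_le_dist [NormedSpace ℝ E] [FiniteDimensional ℝ E] {Ω : Set E} {y y' : E}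
    (hy : y ∈ Ω) (hy' : y' ∉ Ω) : Metric.infDist y (frontier Ω) ≤ dist y y' := by
  obtain ⟨x, hx, hdist⟩ :=
    exists_mem_frontier_infDist_compl_eq_dist hy fun h ↦ hy' (h ▸ Set.mem_univ y')
  exact (Metric.infDist_le_dist_of_mem hx).trans (hdist ▸ Metric.infDist_le_dist_of_mem hy')

lemma infDist_frontier_le_inner [InnerProductSpace ℝ E] [FiniteDimensional ℝ E] {Ω : Set E}
    {e x₀ y : E} (he : ‖e‖ = 1) (h : ∀ z ∈ Ω, 0 < ⟪e, z - x₀⟫) (hy : y ∈ Ω) :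
    Metric.infDist y (frontier Ω) ≤ ⟪e, y - x₀⟫ := by
  have foot_notMem : y - ⟪e, y - x₀⟫ • e ∉ Ω := fun hmem ↦ by
    have := h _ hmem
    rw [sub_right_comm, inner_sub_right, real_inner_smul_right, real_inner_self_eq_norm_sq,
      he] at this
    simp at this
  simpa [norm_smul, he, abs_of_pos (h y hy)] using infDist_frontier_le_dist hy foot_notMem

lemma exists_mem_frontier_infDist_eq_dist [NormedSpace ℝ E] [FiniteDimensional ℝ E] [Nontrivial E]
    {Ω : Set E} {y : E} (hΩ : Bornology.IsBounded Ω) (hy : y ∈ Ω) :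
    ∃ x₀ ∈ frontier Ω, Metric.infDist y (frontier Ω) = dist y x₀ := by
  have ne_univ : Ω ≠ Set.univ := fun h ↦ NormedSpace.unbounded_univ ℝ E (h ▸ hΩ)
  obtain ⟨x, hx, -⟩ := exists_mem_frontier_infDist_compl_eq_dist hy ne_univ
  have := FiniteDimensional.proper ℝ E
  exact isClosed_frontier.exists_infDist_eq_dist ⟨x, hx⟩ y

lemma sq_le_mul_rpow_of_mul_rpow_le {a η r s : ℝ} (ha : 0 < a) (hη : 0 < η) (hr : 0 ≤ r)
    (h : η * r ^ a ≤ s) : r ^ 2 ≤ (η ^ (2 / a))⁻¹ * s ^ (2 / a) := by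
  have key : η ^ (2 / a) * r ^ 2 ≤ s ^ (2 / a) :=
    calc η ^ (2 / a) * r ^ 2 = (η * r ^ a) ^ (2 / a) := by
          rw [Real.mul_rpow hη.le (by positivity), ← Real.rpow_mul hr, mul_div_cancel₀ _ ha.ne',
            Real.rpow_two]
      _ ≤ s ^ (2 / a) := by gcongr
  rwa [le_inv_mul_iff₀ (by positivity)]

lemma IsATypePoint.exists_unit_mul_rpow_le_inner {n : ℕ} {hn : 0 < n}
    {Ω : Set (EuclideanSpace ℝ (Fin n))} {a η : ℝ} {x₀ : EuclideanSpace ℝ (Fin n)}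
    (h : IsATypePoint hn Ω a η x₀) :
    ∃ e : EuclideanSpace ℝ (Fin n), ‖e‖ = 1 ∧
      ∀ y ∈ Ω, η * ‖(ℝ ∙ e)ᗮ.starProjection (y - x₀)‖ ^ a ≤ ⟪e, y - x₀⟫ := by
  obtain ⟨f, hf⟩ := h
  let e := f.symm (EuclideanSpace.single (lastIdx n hn) 1)
  have norm_e : ‖e‖ = 1 := by simp [e]
  have inner_e (z : EuclideanSpace ℝ (Fin n)) : ⟪e, z⟫ = f z (lastIdx n hn) := by
    rw [← f.inner_map_map, f.apply_symm_apply, EuclideanSpace.inner_single_left]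
    simp
  have norm_tangential (z : EuclideanSpace ℝ (Fin n)) : ‖(ℝ ∙ e)ᗮ.starProjection z‖
      = √(∑ j ∈ Finset.univ.erase (lastIdx n hn), f z j ^ 2) := by
    rw [eq_comm, Real.sqrt_eq_iff_eq_sq (by positivity) (norm_nonneg _),
      norm_sq_starProjection_orthogonal_singleton norm_e, inner_e, ← f.norm_map,
      EuclideanSpace.real_norm_sq_eq, Finset.sum_erase_eq_sub (Finset.mem_univ _)]
  refine ⟨e, norm_e, fun y hy ↦ ?_⟩
  rw [norm_tangential, inner_e]
  exact hf y hy

lemma IsATypePoint.exists_unit_inner_pos_norm_sq_le {n : ℕ} {hn : 0 < n}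
    {Ω : Set (EuclideanSpace ℝ (Fin n))} {a η : ℝ} {x₀ : EuclideanSpace ℝ (Fin n)}
    (h : IsATypePoint hn Ω a η x₀) (hΩ : IsOpen Ω) (ha : 0 < a) (hη : 0 < η) :
    ∃ e : EuclideanSpace ℝ (Fin n), ‖e‖ = 1 ∧ (∀ y ∈ Ω, 0 < ⟪e, y - x₀⟫) ∧
      ∀ y ∈ Ω, ‖(ℝ ∙ e)ᗮ.starProjection (y - x₀)‖ ^ 2
        ≤ (η ^ (2 / a))⁻¹ * ⟪e, y - x₀⟫ ^ (2 / a) := by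
  obtain ⟨e, he, hcusp⟩ := h.exists_unit_mul_rpow_le_inner
  have inner_nonneg (y) (hy : y ∈ Ω) : 0 ≤ ⟪e, y - x₀⟫ := le_trans (by positivity) (hcusp y hy)
  have functional_ne_zero : innerSL ℝ e ≠ 0 := by simp [← norm_ne_zero_iff, he]
  exact ⟨e, he, fun y hy ↦ pos_of_nonneg_on_isOpen hΩ functional_ne_zero inner_nonneg hy,
    fun y hy ↦ sq_le_mul_rpow_of_mul_rpow_le ha hη (norm_nonneg _) (hcusp y hy)⟩

end Geometry

section Comparison

variable {n : ℕ} {Ω : Set (EuclideanSpace ℝ (Fin n))} {u : EuclideanSpace ℝ (Fin n) → ℝ}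
  {e x₀ x : EuclideanSpace ℝ (Fin n)} {A α β γ δ κ L M : ℝ}

/-- `u` is a supersolution of `det D²u = A d_x^{β-n-1} |u|^{-α}` on `Ω` which is nonnegative on
`∂Ω`, the class of functions for which comparison with the barrier is proved. The differential
inequality is imposed only where `u < 0`. -/
structure IsSupersolution (Ω : Set (EuclideanSpace ℝ (Fin n))) (A α β : ℝ)
    (u : EuclideanSpace ℝ (Fin n) → ℝ) : Prop where
  continuousOn : ContinuousOn u (closure Ω)
  contDiffOn : ContDiffOn ℝ 2 u Ω
  nonneg_of_mem_frontier : ∀ x ∈ frontier Ω, 0 ≤ u x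
  hessianDet_le : ∀ x ∈ Ω, u x < 0 →
    hessianDet u x ≤ A * Metric.infDist x (frontier Ω) ^ (β - n - 1) * |u x| ^ (-α)

lemma IsClassicalSolution.isSupersolution {F : EuclideanSpace ℝ (Fin n) → ℝ → ℝ}
    (hu : IsClassicalSolution Ω F u) (hF : SatisfiesFCond Ω F A α β) :
    IsSupersolution Ω A α β u := by
  obtain ⟨continuousOn, -, contDiffOn, -, eq_zero, hessianDet_eq⟩ := hu
  refine ⟨continuousOn, contDiffOn, fun x hx ↦ (eq_zero x hx).ge, fun x hx hux ↦ ?_⟩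
  rw [hessianDet_eq x hx]
  exact (hF.2.2 x hx (u x) hux).2

/-- The barrier with vertex `x₀` and inner normal `e`: the normal coordinate is `⟪e, z - x₀⟫` and
the tangential one is the projection of `z - x₀` to the hyperplane orthogonal to `e`. -/
noncomputable def barrierAt (e x₀ : EuclideanSpace ℝ (Fin n)) (γ δ κ : ℝ)
    (z : EuclideanSpace ℝ (Fin n)) : ℝ :=
  barrier (innerSL ℝ e) (ℝ ∙ e)ᗮ.starProjection γ δ κ (z - x₀)

lemma contDiffAt_barrierAt (hx : 0 < ⟪e, x - x₀⟫) : ContDiffAt ℝ 2 (barrierAt e x₀ γ δ κ) x :=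
  (contDiffAt_barrier (ℓ := innerSL ℝ e) hx).comp x (contDiffAt_id.sub contDiffAt_const)

lemma mul_pow_le_hessianDet_of_isLocalMax_sub [NeZero n] (he : ‖e‖ = 1)
    (hκ : IsBarrierCoeff γ δ L κ) (hγ : 0 ≤ γ * (1 - γ)) (hM : 0 < M) (hx : 0 < ⟪e, x - x₀⟫)
    (hq : ‖(ℝ ∙ e)ᗮ.starProjection (x - x₀)‖ ^ 2 ≤ L * ⟪e, x - x₀⟫ ^ (γ - δ))
    (hu : ContDiffAt ℝ 2 u x) (hmax : IsLocalMax (M • barrierAt e x₀ γ δ κ - u) x) :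
    M * (γ * (1 - γ) * ⟪e, x - x₀⟫ ^ (γ - 2)) * (M * (κ * ⟪e, x - x₀⟫ ^ δ)) ^ (n - 1)
      ≤ hessianDet u x := by
  have κ_pos := hκ.pos
  have hw : ContDiffAt ℝ 2 (barrierAt e x₀ γ δ κ) x := contDiffAt_barrierAt hx
  refine mul_pow_le_hessianDet he (by positivity) (by positivity) hu fun v ↦ ?_
  calc M * (γ * (1 - γ) * ⟪e, x - x₀⟫ ^ (γ - 2)) * ⟪e, v⟫ ^ 2
        + M * (κ * ⟪e, x - x₀⟫ ^ δ) * ‖(ℝ ∙ e)ᗮ.starProjection v‖ ^ 2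
      = M * (γ * (1 - γ) * ⟪e, x - x₀⟫ ^ (γ - 2) * ⟪e, v⟫ ^ 2
        + κ * ⟪e, x - x₀⟫ ^ δ * ‖(ℝ ∙ e)ᗮ.starProjection v‖ ^ 2) := by ring
    _ ≤ M * iteratedFDeriv ℝ 2 (barrierAt e x₀ γ δ κ) x ![v, v] := by
      unfold barrierAt
      rw [iteratedFDeriv_comp_sub]
      gcongr
      exact le_iteratedFDeriv_two_barrier (ℓ := innerSL ℝ e) hκ hx hq v
    _ = iteratedFDeriv ℝ 2 (M • barrierAt e x₀ γ δ κ) x ![v, v] := by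
      rw [iteratedFDeriv_const_smul_apply (by exact_mod_cast hw), smul_apply, smul_eq_mul]
    _ ≤ iteratedFDeriv ℝ 2 u x ![v, v] :=
      iteratedFDeriv_two_le_of_isLocalMax_sub (contDiffAt_const.smul hw) hu hmax v

lemma IsSupersolution.hessianDet_le_mul_rpow {s : ℝ} (hu : IsSupersolution Ω A α β u)
    (hA : 0 ≤ A) (hα : 0 ≤ α) (hβ : (n : ℝ) + 1 ≤ β) (hx : x ∈ Ω) (hs : 0 < s)
    (hdist : Metric.infDist x (frontier Ω) ≤ s) (hux : u x ≤ -s ^ γ) :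
    hessianDet u x ≤ A * s ^ (β - n - 1 - α * γ) := by
  have pow_pos : 0 < s ^ γ := by positivity
  have u_neg : u x < 0 := by linarith
  have pow_le_abs : s ^ γ ≤ |u x| := by rw [abs_of_neg u_neg]; linarith
  calc hessianDet u x
      ≤ A * Metric.infDist x (frontier Ω) ^ (β - n - 1) * |u x| ^ (-α) :=
        hu.hessianDet_le x hx u_neg
    _ ≤ A * s ^ (β - n - 1) * (s ^ γ) ^ (-α) := by
        have dist_pow_le : Metric.infDist x (frontier Ω) ^ (β - n - 1) ≤ s ^ (β - n - 1) :=
          Real.rpow_le_rpow Metric.infDist_nonneg hdist (by linarith)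
        have abs_pow_le : |u x| ^ (-α) ≤ (s ^ γ) ^ (-α) :=
          Real.rpow_le_rpow_of_nonpos pow_pos pow_le_abs (neg_nonpos.2 hα)
        gcongr
    _ = A * s ^ (β - n - 1 - α * γ) := by
        rw [← Real.rpow_mul hs.le, mul_assoc, ← Real.rpow_add hs]
        ring_nf

lemma mul_rpow_le_mul_mul_pow {s : ℝ} (hn : n ≠ 0) (hγ : 0 ≤ γ * (1 - γ)) (hκ : 0 ≤ κ)
    (hM : 1 ≤ M) (hs : 0 < s) :
    M * (γ * (1 - γ) * κ ^ (n - 1)) * s ^ (γ - 2 + (n - 1) * δ)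
      ≤ M * (γ * (1 - γ) * s ^ (γ - 2)) * (M * (κ * s ^ δ)) ^ (n - 1) := by
  have pow_split : s ^ (γ - 2 + (n - 1) * δ) = s ^ (γ - 2) * (s ^ δ) ^ (n - 1) := by
    rw [Real.rpow_add hs, ← Real.rpow_mul_natCast hs.le, Nat.cast_pred (Nat.pos_of_ne_zero hn),
      mul_comm δ]
  calc M * (γ * (1 - γ) * κ ^ (n - 1)) * s ^ (γ - 2 + (n - 1) * δ)
      = M * (γ * (1 - γ) * s ^ (γ - 2)) * (1 * (κ * s ^ δ)) ^ (n - 1) := by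
        rw [pow_split, one_mul, mul_pow]
        ring
    _ ≤ M * (γ * (1 - γ) * s ^ (γ - 2)) * (M * (κ * s ^ δ)) ^ (n - 1) := by gcongr

-- At an interior maximum of `M • w - u`, with `w` the barrier, the Hessian of `u` dominates that of
-- `M • w`; `hexp` balances the powers of the normal coordinate in the resulting determinant bounds.
lemma IsSupersolution.mul_barrierAt_le [NeZero n] (hu : IsSupersolution Ω A α β u)
    (hΩ : IsOpen Ω) (hΩb : Bornology.IsBounded Ω) (he : ‖e‖ = 1) (hA : 0 ≤ A) (hα : 0 ≤ α)
    (hβ : (n : ℝ) + 1 ≤ β) (hγ : 0 ≤ γ * (1 - γ)) (hκ : IsBarrierCoeff γ δ L κ)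
    (hexp : γ - 2 + (n - 1) * δ = β - n - 1 - α * γ) (hM : 1 ≤ M)
    (hAM : A < M * (γ * (1 - γ) * κ ^ (n - 1))) (hpos : ∀ z ∈ Ω, 0 < ⟪e, z - x₀⟫)
    (hq : ∀ z ∈ Ω, ‖(ℝ ∙ e)ᗮ.starProjection (z - x₀)‖ ^ 2 ≤ L * ⟪e, z - x₀⟫ ^ (γ - δ))
    (hx : x ∈ Ω) : M * barrierAt e x₀ γ δ κ x ≤ u x := by
  have barrier_le (z) (hz : z ∈ Ω) : M * barrierAt e x₀ γ δ κ z ≤ -⟪e, z - x₀⟫ ^ γ :=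
    have barrierAt_le : barrierAt e x₀ γ δ κ z ≤ -⟪e, z - x₀⟫ ^ γ :=
      barrier_le_neg_rpow (ℓ := innerSL ℝ e) hκ (hpos z hz) (hq z hz)
    have rpow_pos := Real.rpow_pos_of_pos (hpos z hz) γ
    (mul_le_of_one_le_left (by linarith) hM).trans barrierAt_le
  by_contra! hlt
  obtain ⟨z, hz, hlt_z, hmax⟩ := exists_isLocalMax_sub_of_lt (w := M • barrierAt e x₀ γ δ κ) hΩ
    hΩb.isCompact_closure hu.continuousOn hu.nonneg_of_mem_frontier
    (fun z hz ↦ ((contDiffAt_barrierAt (hpos z hz)).continuousAt.const_smul M).continuousWithinAt)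
    (fun z hz ↦ (barrier_le z hz).trans
      (neg_nonpos.2 (Real.rpow_nonneg (hpos z hz).le γ))) hx hlt
  have lower := (mul_rpow_le_mul_mul_pow (δ := δ) (NeZero.ne n) hγ hκ.pos.le hM (hpos z hz)).trans
    (mul_pow_le_hessianDet_of_isLocalMax_sub he hκ hγ (by linarith) (hpos z hz) (hq z hz)
      (hu.contDiffOn.contDiffAt (hΩ.mem_nhds hz)) hmax)
  have upper := hu.hessianDet_le_mul_rpow hA hα hβ hz (hpos z hz)
    (infDist_frontier_le_inner he hpos hz) (hlt_z.le.trans (barrier_le z hz))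
  rw [← hexp] at upper
  exact hAM.not_ge (le_of_mul_le_mul_right (lower.trans upper)
    (Real.rpow_pos_of_pos (hpos z hz) _))

end Comparison

section Exponent

variable {n : ℕ} {a α β : ℝ}

/-- The exponent `γ₂` of the distance bound. -/
noncomputable def decayExponent (n : ℕ) (a α β : ℝ) : ℝ :=
  (β - n + 1) / (n + α) + (2 * n - 2) / (a * (n + α))

lemma decayExponent_eq_div (n : ℕ) (a α β : ℝ) :
    decayExponent n a α β = (β - n + 1 + (2 * n - 2) / a) / (n + α) := by
  rw [decayExponent, ← div_div, ← add_div]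

lemma decayExponent_pos (hn : 0 < n) (ha : 0 < a) (hα : 0 ≤ α) (hβ : (n : ℝ) + 1 ≤ β) :
    0 < decayExponent n a α β := by
  have one_le_n : (1 : ℝ) ≤ n := Nat.one_le_cast.2 hn
  have : 0 ≤ (2 * n - 2) / a := div_nonneg (by linarith) ha.le
  rw [decayExponent_eq_div]
  exact div_pos (by linarith) (by linarith)

lemma decayExponent_lt_one (hn : 0 < n) (hα : 0 ≤ α) (hβ : β < α + 2 * n - 1 - (2 * n - 2) / a) :
    decayExponent n a α β < 1 := by
  rw [decayExponent_eq_div, div_lt_one (by positivity)]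
  linarith

lemma decayExponent_balance (hn : 0 < n) (hα : 0 ≤ α) :
    decayExponent n a α β - 2 + (n - 1) * (decayExponent n a α β - 2 / a)
      = β - n - 1 - α * decayExponent n a α β := by
  have : decayExponent n a α β * (n + α) = β - n + 1 + (2 * n - 2) / a := by
    rw [decayExponent_eq_div, div_mul_cancel₀ _ (by positivity)]
  linear_combination this

end Exponent

theorem pointwise_distance_bound_aEta_domain_general (n : ℕ) (hn : 0 < n) (a η A α β : ℝ)
    (ha : 0 < a) (hη : 0 < η) (hA : 0 ≤ A) (hα : 0 ≤ α) (hβ : (n : ℝ) + 1 ≤ β)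
    (hβ' : β < α + 2 * n - 1 - (2 * n - 2) / a) :
    ∃ C : ℝ, 0 < C ∧
      ∀ (Ω : Set (EuclideanSpace ℝ (Fin n))) (u : EuclideanSpace ℝ (Fin n) → ℝ),
        IsOpen Ω → Bornology.IsBounded Ω → IsSupersolution Ω A α β u →
        ∀ x₀, IsATypePoint hn Ω a η x₀ →
        ∀ y ∈ Ω, -(C * dist y x₀ ^ decayExponent n a α β) ≤ u y := by
  have : NeZero n := ⟨hn.ne'⟩
  set γ := decayExponent n a α β
  have γ_pos : 0 < γ := decayExponent_pos hn ha hα hβ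
  have γ_lt_one : γ < 1 := decayExponent_lt_one hn hα hβ'
  have γ_mul_pos : 0 < γ * (1 - γ) := mul_pos γ_pos (sub_pos.2 γ_lt_one)
  obtain ⟨κ, hκ⟩ := exists_isBarrierCoeff γ_pos γ_lt_one
    (L := (η ^ (2 / a))⁻¹) (by positivity) (γ - 2 / a)
  obtain ⟨M, one_le_M, hAM⟩ : ∃ M, 1 ≤ M ∧ A < M * (γ * (1 - γ) * κ ^ (n - 1)) :=
    ((eventually_ge_atTop 1).and ((tendsto_id.atTop_mul_const
      (mul_pos γ_mul_pos (pow_pos hκ.pos _))).eventually_gt_atTop A)).exists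
  refine ⟨2 * M, by positivity, fun Ω u hΩ hΩb hu x₀ hx₀ y hy ↦ ?_⟩
  obtain ⟨e, he, normal_pos, tangential_le⟩ := hx₀.exists_unit_inner_pos_norm_sq_le hΩ ha hη
  have inner_le_dist : ⟪e, y - x₀⟫ ≤ dist y x₀ := by
    simpa [he, dist_eq_norm] using real_inner_le_norm e (y - x₀)
  have normal_nonneg := (normal_pos y hy).le
  calc -(2 * M * dist y x₀ ^ γ) ≤ -(2 * M * ⟪e, y - x₀⟫ ^ γ) := by gcongr
    _ = M * (-2 * ⟪e, y - x₀⟫ ^ γ) := by ring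
    _ ≤ M * barrierAt e x₀ γ (γ - 2 / a) κ y := by
      gcongr
      exact neg_two_mul_rpow_le_barrier (ℓ := innerSL ℝ e) hκ.pos.le normal_nonneg
    _ ≤ u y := hu.mul_barrierAt_le hΩ hΩb he hA hα hβ γ_mul_pos.le hκ
      (decayExponent_balance hn hα) one_le_M hAM normal_pos
      (by simpa only [sub_sub_cancel] using tangential_le) hy

/-- Theorem 1.2 (pointwise form): on an `(a,η)` type domain with `a > 2`,
`|u(y)| ≤ C d_y^{γ₂}` with `γ₂ = (β-n+1)/(n+α) + (2n-2)/(a(n+α))` and `C` depending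
only on `a, n, α, β, η, A` and `diam Ω` (through the bound `D`). -/
theorem pointwise_distance_bound_aEta_domain
    (n : ℕ) (hn : 2 ≤ n) (a η A α β D : ℝ) (ha : 2 < a) (hη : 0 < η)
    (hA : 0 < A) (hα : 0 ≤ α) (hβ : (n : ℝ) + 1 ≤ β)
    (hβ' : β < α + 2 * n - 1 - (2 * n - 2) / a) :
    ∃ C : ℝ, 0 < C ∧
      ∀ (Ω : Set (EuclideanSpace ℝ (Fin n))) (F : EuclideanSpace ℝ (Fin n) → ℝ → ℝ)
        (u : EuclideanSpace ℝ (Fin n) → ℝ),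
        IsOpen Ω → Convex ℝ Ω → Bornology.IsBounded Ω → Ω.Nonempty →
        Metric.diam Ω ≤ D →
        IsATypeDomain (by omega) Ω a η →
        SatisfiesFCond Ω F A α β →
        IsClassicalSolution Ω F u →
        ∀ y ∈ Ω, |u y| ≤
          C * Metric.infDist y (frontier Ω) ^
            ((β - n + 1) / (n + α) + (2 * n - 2) / (a * (n + α))) := by
  obtain ⟨C, C_pos, hC⟩ := pointwise_distance_bound_aEta_domain_general n (by omega) a η A α β
    (by linarith) hη hA.le hα hβ hβ'
  refine ⟨C, C_pos, fun Ω F u hΩ _ hΩb _ _ htype hF hu y hy ↦ ?_⟩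
  have : NeZero n := ⟨by omega⟩
  obtain ⟨x₀, hx₀, hdist⟩ := exists_mem_frontier_infDist_eq_dist hΩb hy
  have u_neg : u y < 0 := hu.2.2.2.1 y hy
  rw [abs_of_neg u_neg, hdist]
  exact neg_le.1 (hC Ω u hΩ hΩb (hu.isSupersolution hF) x₀ (htype x₀ hx₀) y hy)
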